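/- Let ψ = Σ_{i=1}^M (f_i + h_i) and Ω = {x̂ ∈ S : ψ(x̂) = min_{x∈S} ψ(x)}, assumed nonempty. If ψ is strictly convex, then the sequence {x_n} generated by Algorithm 2 converges weakly to a point in Ω (namely, the unique minimizer of ψ over S). -/

import Mathlib

open Filter Topology

section helpers
variable {H : Type*} [NormedAddCommGroup H] [InnerProductSpace ℝ H]

local notation "⟪" x "," y "⟫" => @inner ℝ H _ x y

lemma aux_exists_subgradient [CompleteSpace H] {f : H → ℝ} (hc : Continuous f)
    (hf : ConvexOn ℝ Set.univ f) (p : H) : ∃ g : H, ∀ v, f p + ⟪g, v - p⟫ ≤ f v := by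
  have hconv : Convex ℝ {q : H × ℝ | f q.1 < q.2} := by
    have := hf.convex_strict_epigraph
    simpa using this
  have hopen : IsOpen {q : H × ℝ | f q.1 < q.2} :=
    isOpen_lt (hc.comp continuous_fst) continuous_snd
  obtain ⟨F, hF⟩ := geometric_hahn_banach_open_point (x := (p, f p)) hconv hopen (by simp)
  set c := F (0, 1) with hcdef
  have hdec : ∀ (v : H) (t : ℝ), F (v, t) = F (v, 0) + t * c := by
    intro v t
    have : ((v, t) : H × ℝ) = (v, 0) + t • (0, 1) := by simp
    rw [this, map_add, map_smul]; simp [hcdef]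
  have hc0 : c < 0 := by
    have := hF (p, f p + 1) (by simp)
    rw [hdec p (f p + 1), hdec p (f p)] at this
    linarith
  have key : ∀ v, F (v, 0) + f v * c ≤ F (p, 0) + f p * c := by
    intro v
    refine le_of_forall_pos_le_add fun ε hε => ?_
    have := hF (v, f v + ε / (-c)) (by simp; exact div_pos hε (by linarith))
    rw [hdec v, hdec p (f p)] at this
    have e : ε / (-c) * c = -ε := by
      have : c ≠ 0 := hc0.ne
      rw [div_neg, neg_mul, div_mul_cancel₀ _ this]
    nlinarith
  let G : H →L[ℝ] ℝ := (-c)⁻¹ • (F.comp (ContinuousLinearMap.inl ℝ H ℝ))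
  refine ⟨(InnerProductSpace.toDual ℝ H).symm G, fun v => ?_⟩
  rw [InnerProductSpace.toDual_symm_apply]
  have hG : G (v - p) = (-c)⁻¹ * (F (v, 0) - F (p, 0)) := by
    simp only [G, map_sub]
    simp
    ring
  rw [hG]
  have h1 := key v
  have : (-c)⁻¹ * (F (v, 0) - F (p, 0)) ≤ f v - f p := by
    rw [inv_mul_le_iff₀ (by linarith)]; linarith
  linarith

lemma aux_line [CompleteSpace H] {h : H → ℝ} {h' : H → H} (hg : ∀ x, HasGradientAt h (h' x) x)
    (x v : H) (t : ℝ) : HasDerivAt (fun t : ℝ => h (x + t • v)) ⟪h' (x + t • v), v⟫ t := by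
  have h1 := (hg (x + t • v)).hasFDerivAt
  have h2 : HasDerivAt (fun t : ℝ => x + t • v) v t := by
    simpa using ((hasDerivAt_id t).smul_const v).const_add x
  have := h1.comp_hasDerivAt t h2
  exact this

lemma aux_grad_ineq [CompleteSpace H] {h : H → ℝ} {h' : H → H}
    (hc : ConvexOn ℝ Set.univ h) (hg : ∀ x, HasGradientAt h (h' x) x) (x y : H) :
    h x + ⟪h' x, y - x⟫ ≤ h y := by
  have hcl : ConvexOn ℝ Set.univ (fun t : ℝ => h (x + t • (y - x))) := by
    have := hc.comp_affineMap (AffineMap.lineMap x y : ℝ →ᵃ[ℝ] H)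
    refine (this.congr fun t _ => ?_)
    simp only [Function.comp_apply, AffineMap.lineMap_apply_module']
    rw [add_comm]
  have h0 := aux_line hg x (y - x) 0
  have := hcl.le_slope_of_hasDerivAt (Set.mem_univ 0) (Set.mem_univ 1) one_pos h0
  simp [slope_def_field] at this
  linarith

lemma aux_descent [CompleteSpace H] {h : H → ℝ} {h' : H → H} {K : ℝ}
    (hg : ∀ x, HasGradientAt h (h' x) x)
    (hl : ∀ x y, ‖h' x - h' y‖ ≤ K * ‖x - y‖) (x v : H) :
    h (x + v) ≤ h x + ⟪h' x, v⟫ + K / 2 * ‖v‖ ^ 2 := by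
  let φ : ℝ → ℝ := fun t => h (x + t • v) - t * ⟪h' x, v⟫ - K / 2 * ‖v‖ ^ 2 * t ^ 2
  have hd : ∀ t, HasDerivAt φ (⟪h' (x + t • v), v⟫ - ⟪h' x, v⟫ - K * ‖v‖ ^ 2 * t) t := by
    intro t
    have := ((aux_line hg x v t).sub ((hasDerivAt_id t).mul_const ⟪h' x, v⟫)).sub
      (((hasDerivAt_id t).pow 2).const_mul (K / 2 * ‖v‖ ^ 2))
    refine this.congr_deriv ?_
    simp; ring
  have hanti : AntitoneOn φ (Set.Icc 0 1) := by
    refine antitoneOn_of_deriv_nonpos (convex_Icc 0 1)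
      (fun t _ => (hd t).continuousAt.continuousWithinAt)
      (fun t _ => (hd t).differentiableAt.differentiableWithinAt) ?_
    intro t ht
    rw [interior_Icc] at ht
    rw [(hd t).deriv, ← inner_sub_left]
    have h1 := real_inner_le_norm (h' (x + t • v) - h' x) v
    have h2 := hl (x + t • v) x
    rw [add_sub_cancel_left, norm_smul, Real.norm_eq_abs, abs_of_pos ht.1] at h2
    nlinarith [norm_nonneg v]
  have := hanti (Set.left_mem_Icc.2 zero_le_one) (Set.right_mem_Icc.2 zero_le_one) zero_le_one
  simp [φ] at this
  linarith

lemma aux_half_coco [CompleteSpace H] {h : H → ℝ} {h' : H → H} {L : ℝ} (hL : 0 < L)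
    (hc : ConvexOn ℝ Set.univ h) (hg : ∀ x, HasGradientAt h (h' x) x)
    (hl : ∀ x y, ‖h' x - h' y‖ ≤ (1 / L) * ‖x - y‖) (x y : H) :
    h x + ⟪h' x, y - x⟫ + L / 2 * ‖h' y - h' x‖ ^ 2 ≤ h y := by
  have h1 := aux_grad_ineq hc hg x (y + (-L) • (h' y - h' x))
  have h2 := aux_descent hg hl y ((-L) • (h' y - h' x))
  have e1 : y + (-L) • (h' y - h' x) - x = (y - x) + (-L) • (h' y - h' x) := by abel
  rw [e1, inner_add_right, inner_smul_right] at h1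
  rw [inner_smul_right, norm_smul, Real.norm_eq_abs, abs_neg, abs_of_pos hL, mul_pow] at h2
  have e2 : ⟪h' y, h' y - h' x⟫ - ⟪h' x, h' y - h' x⟫ = ‖h' y - h' x‖ ^ 2 := by
    rw [← inner_sub_left, real_inner_self_eq_norm_sq]
  have e3 : 1 / L / 2 * (L ^ 2 * ‖h' y - h' x‖ ^ 2) = L / 2 * ‖h' y - h' x‖ ^ 2 := by
    field_simp
  rw [e3] at h2
  have e4 : L * ⟪h' y, h' y - h' x⟫ - L * ⟪h' x, h' y - h' x⟫ = L * ‖h' y - h' x‖ ^ 2 := by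
    rw [← e2]; ring
  linarith

lemma aux_forward_nonexp [CompleteSpace H] {h : H → ℝ} {h' : H → H} {L lam : ℝ} (hL : 0 < L)
    (hc : ConvexOn ℝ Set.univ h) (hg : ∀ x, HasGradientAt h (h' x) x)
    (hl : ∀ x y, ‖h' x - h' y‖ ≤ (1 / L) * ‖x - y‖) (hlam : 0 < lam) (hle : lam ≤ 2 * L)
    (x y : H) : ‖(x - y) - lam • (h' x - h' y)‖ ≤ ‖x - y‖ := by
  have h1 := aux_half_coco hL hc hg hl x y
  have h2 := aux_half_coco hL hc hg hl y x
  have e : ‖h' y - h' x‖ = ‖h' x - h' y‖ := norm_sub_rev _ _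
  rw [e] at h1
  have e1 : ⟪h' x, y - x⟫ + ⟪h' y, x - y⟫ = - ⟪x - y, h' x - h' y⟫ := by
    simp only [inner_sub_left, inner_sub_right, real_inner_comm]; ring
  have h3 : L * ‖h' x - h' y‖ ^ 2 ≤ ⟪x - y, h' x - h' y⟫ := by linarith
  refine le_of_sq_le_sq ?_ (norm_nonneg _)
  rw [norm_sub_sq_real, inner_smul_right, norm_smul, Real.norm_eq_abs, abs_of_pos hlam, mul_pow]
  nlinarith [mul_le_mul_of_nonneg_left h3 hlam.le,
    mul_nonneg (mul_nonneg hlam.le (sub_nonneg.2 hle)) (sq_nonneg ‖h' x - h' y‖)]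

lemma aux_prox_ineq {f : H → ℝ} (hf : ConvexOn ℝ Set.univ f) {lam : ℝ} (hlam : 0 < lam) {a y : H}
    (hy : ∀ v, f y + (1 / (2 * lam)) * ‖a - y‖ ^ 2 ≤ f v + (1 / (2 * lam)) * ‖a - v‖ ^ 2) (v : H) :
    ⟪v - y, a - y⟫ ≤ lam * (f v - f y) := by
  have key : ∀ t : ℝ, 0 < t → t ≤ 1 →
      ⟪v - y, a - y⟫ - lam * (f v - f y) ≤ t * (‖v - y‖ ^ 2 / 2) := by
    intro t ht ht1
    have h1 := hy (y + t • (v - y))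
    have h2 := hf.2 (Set.mem_univ y) (Set.mem_univ v) (sub_nonneg.2 ht1) ht.le (by ring)
    have e : (1 - t) • y + t • v = y + t • (v - y) := by
      rw [sub_smul, smul_sub, one_smul]; abel
    rw [e] at h2
    simp only [smul_eq_mul] at h2
    have e2 : a - (y + t • (v - y)) = (a - y) - t • (v - y) := by abel
    rw [e2, norm_sub_sq_real (a - y), inner_smul_right, norm_smul, Real.norm_eq_abs,
      abs_of_pos ht, mul_pow, real_inner_comm] at h1
    have h3 : (1 / (2 * lam)) * (2 * (t * ⟪v - y, a - y⟫) - t ^ 2 * ‖v - y‖ ^ 2)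
        ≤ t * (f v - f y) := by
      nlinarith
    rw [one_div, inv_mul_le_iff₀ (by positivity)] at h3
    have h4 : t * (⟪v - y, a - y⟫ - lam * (f v - f y)) ≤ t * (t * (‖v - y‖ ^ 2 / 2)) := by
      nlinarith
    exact le_of_mul_le_mul_left h4 ht
  have hlim : Tendsto (fun t : ℝ => t * (‖v - y‖ ^ 2 / 2)) (𝓝[>] 0) (𝓝 0) := by
    have : Tendsto (fun t : ℝ => t * (‖v - y‖ ^ 2 / 2)) (𝓝 0) (𝓝 (0 * (‖v - y‖ ^ 2 / 2))) :=
      tendsto_id.mul_const _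
    rw [zero_mul] at this
    exact this.mono_left nhdsWithin_le_nhds
  have := ge_of_tendsto hlim (b := ⟪v - y, a - y⟫ - lam * (f v - f y)) (by
    filter_upwards [Ioc_mem_nhdsGT (zero_lt_one (α := ℝ))] with t ht
    exact key t ht.1 ht.2)
  linarith

lemma aux_prox_diff {f : H → ℝ} {l l' : ℝ} (hl : 0 < l) (hl' : 0 < l')
    {y y' z z' g g' e e' : H}
    (h1 : ∀ v, ⟪v - y, z + l • (-g + e) - y⟫ ≤ l * (f v - f y))
    (h2 : ∀ v, ⟪v - y', z' + l' • (-g' + e') - y'⟫ ≤ l' * (f v - f y'))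
    (hn : ‖(z - z') - l • (g - g')‖ ≤ ‖z - z'‖) :
    ‖y - y'‖ / l ≤ ‖z - z'‖ / l + (‖z'‖ + ‖y'‖) * |1 / l - 1 / l'| + ‖e‖ + ‖e'‖ := by
  have a1 : ⟪y' - y, l⁻¹ • (z + l • (-g + e) - y)⟫ ≤ f y' - f y := by
    rw [inner_smul_right, inv_mul_le_iff₀ hl]; exact h1 y'
  have a2 : ⟪y - y', l'⁻¹ • (z' + l' • (-g' + e') - y')⟫ ≤ f y - f y' := by
    rw [inner_smul_right, inv_mul_le_iff₀ hl']; exact h2 y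
  set R : H := l⁻¹ • ((z - z') - l • (g - g')) + (l⁻¹ - l'⁻¹) • (z' - y') + (e - e') with hR
  have a3 : l⁻¹ • (z + l • (-g + e) - y) - l'⁻¹ • (z' + l' • (-g' + e') - y')
      = R - l⁻¹ • (y - y') := by
    rw [hR]
    have q1 : ∀ v : H, l⁻¹ • l • v = v := fun v => inv_smul_smul₀ hl.ne' v
    have q2 : ∀ v : H, l'⁻¹ • l' • v = v := fun v => inv_smul_smul₀ hl'.ne' v
    simp only [smul_sub, smul_add, sub_smul, smul_neg, q1, q2]
    abel
  have a4 : 0 ≤ ⟪y - y', R - l⁻¹ • (y - y')⟫ := by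
    rw [← a3, inner_sub_right]
    have : ⟪y' - y, l⁻¹ • (z + l • (-g + e) - y)⟫ = - ⟪y - y', l⁻¹ • (z + l • (-g + e) - y)⟫ := by
      rw [← inner_neg_left, neg_sub]
    linarith
  rw [inner_sub_right, inner_smul_right, real_inner_self_eq_norm_sq] at a4
  have a5 := real_inner_le_norm (y - y') R
  have a6 : ‖y - y'‖ / l ≤ ‖R‖ := by
    rcases (norm_nonneg (y - y')).eq_or_lt with h | h
    · rw [← h]; simp
    · have : ‖y - y'‖ * (‖y - y'‖ / l) ≤ ‖y - y'‖ * ‖R‖ := by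
        have : ‖y - y'‖ * (‖y - y'‖ / l) = l⁻¹ * ‖y - y'‖ ^ 2 := by field_simp
        linarith
      exact le_of_mul_le_mul_left this h
  refine a6.trans ?_
  have b1 : ‖l⁻¹ • ((z - z') - l • (g - g'))‖ ≤ ‖z - z'‖ / l := by
    rw [norm_smul, norm_inv, Real.norm_eq_abs, abs_of_pos hl, div_eq_inv_mul]
    exact mul_le_mul_of_nonneg_left hn (by positivity)
  have b2 : ‖(l⁻¹ - l'⁻¹) • (z' - y')‖ ≤ (‖z'‖ + ‖y'‖) * |1 / l - 1 / l'| := by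
    rw [norm_smul, Real.norm_eq_abs, mul_comm, one_div, one_div]
    exact mul_le_mul_of_nonneg_right (norm_sub_le _ _) (abs_nonneg _)
  have b3 := norm_sub_le e e'
  have b4 := norm_add₃_le (a := l⁻¹ • ((z - z') - l • (g - g'))) (b := (l⁻¹ - l'⁻¹) • (z' - y'))
    (c := e - e')
  linarith

lemma aux_xu {r a e : ℕ → ℝ} (hr : ∀ n, 0 ≤ r n) (ha0 : ∀ n, 0 ≤ a n) (ha1 : ∀ n, a n ≤ 1)
    (hs : ¬ Summable a) (he : Tendsto e atTop (𝓝 0))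
    (hrec : ∀ n, r (n + 1) ≤ (1 - a n) * r n + a n * e n) : Tendsto r atTop (𝓝 0) := by
  rw [Metric.tendsto_atTop]
  intro ε hε
  obtain ⟨N, hN⟩ := (eventually_atTop.1 (he.eventually (ge_mem_nhds (show (0 : ℝ) < ε / 2 by linarith))))
  have hs' : ¬ Summable (fun k => a (k + N)) := by
    rwa [summable_nat_add_iff N]
  have hdiv := (not_summable_iff_tendsto_nat_atTop_of_nonneg (fun k => ha0 (k + N))).1 hs'
  have hb : ∀ k, r (k + N) - ε / 2 ≤ Real.exp (-∑ j ∈ Finset.range k, a (j + N)) * r N := by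
    intro k
    induction k with
    | zero => simp; linarith
    | succ k ih =>
      have h1 := hrec (k + N)
      have h2 := hN (k + N) (by omega)
      have h3 : r (k + N + 1) - ε / 2 ≤ (1 - a (k + N)) * (r (k + N) - ε / 2) := by
        nlinarith [ha0 (k + N)]
      have h4 : 1 - a (k + N) ≤ Real.exp (-a (k + N)) := by
        have := Real.add_one_le_exp (-a (k + N)); linarith
      rw [Finset.sum_range_succ, neg_add, Real.exp_add, show k + 1 + N = k + N + 1 by ring]
      calc r (k + N + 1) - ε / 2 ≤ (1 - a (k + N)) * (r (k + N) - ε / 2) := h3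
        _ ≤ (1 - a (k + N)) * (Real.exp (-∑ j ∈ Finset.range k, a (j + N)) * r N) :=
          mul_le_mul_of_nonneg_left ih (by linarith [ha1 (k + N)])
        _ ≤ Real.exp (-a (k + N)) * (Real.exp (-∑ j ∈ Finset.range k, a (j + N)) * r N) :=
          mul_le_mul_of_nonneg_right h4 (mul_nonneg (Real.exp_nonneg _) (hr N))
        _ = _ := by ring
  have hlim : Tendsto (fun k => Real.exp (-∑ j ∈ Finset.range k, a (j + N)) * r N) atTop (𝓝 0) := by
    have := (Real.tendsto_exp_neg_atTop_nhds_zero.comp hdiv).mul_const (r N)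
    simpa using this
  obtain ⟨K, hK⟩ := eventually_atTop.1 (hlim.eventually (gt_mem_nhds (show (0 : ℝ) < ε / 2 by linarith)))
  refine ⟨K + N, fun n hn => ?_⟩
  have h1 := hb (n - N)
  have h2 := hK (n - N) (by omega)
  rw [Nat.sub_add_cancel (by omega)] at h1
  rw [Real.dist_eq, sub_zero, abs_of_nonneg (hr n)]
  linarith

lemma aux_weak_cpt [CompleteSpace H] {x : ℕ → H} {C : ℝ} (hx : ∀ n, ‖x n‖ ≤ C)
    (U : Ultrafilter ℕ) : ∃ p : H, ∀ q, Tendsto (fun n => ⟪x n, q⟫) U (𝓝 ⟪p, q⟫) := by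
  have hK := WeakDual.isCompact_closedBall (𝕜 := ℝ) (E := H) 0 C
  let F : ℕ → WeakDual ℝ H := fun n => StrongDual.toWeakDual (InnerProductSpace.toDual ℝ H (x n))
  have hF : ∀ n, F n ∈ WeakDual.toStrongDual ⁻¹' (Metric.closedBall (0 : StrongDual ℝ H) C) := by
    intro n
    simp [F, hx n]
  obtain ⟨l, -, hl⟩ := hK.ultrafilter_le_nhds (U.map F)
    (by rw [le_principal_iff]; exact Filter.Eventually.of_forall (f := (U : Filter ℕ)) hF)
  refine ⟨(InnerProductSpace.toDual ℝ H).symm (WeakDual.toStrongDual l), fun q => ?_⟩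
  rw [InnerProductSpace.toDual_symm_apply]
  have h1 : Tendsto F U (𝓝 l) := hl
  have h2 := ((WeakDual.eval_continuous q).tendsto l).comp h1
  exact h2

lemma aux_fix_mid {T : H → H} (hT : ∀ x y, ‖T x - T y‖ ^ 2 ≤ ⟪T x - T y, x - y⟫)
    {p q : H} (hp : T p = p) (hq : T q = q) :
    T ((1 / 2 : ℝ) • p + (1 / 2 : ℝ) • q) = (1 / 2 : ℝ) • p + (1 / 2 : ℝ) • q := by
  set m := (1 / 2 : ℝ) • p + (1 / 2 : ℝ) • q with hm
  have key : ∀ p, T p = p → 0 ≤ ⟪T m - p, m - T m⟫ := by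
    intro p hp
    have := hT m p
    rw [hp] at this
    rw [← real_inner_self_eq_norm_sq] at this
    have e : m - p = (T m - p) + (m - T m) := by abel
    rw [e, inner_add_right] at this
    linarith
  have h1 := key p hp
  have h2 := key q hq
  have e : (T m - p) + (T m - q) = -((2 : ℝ) • (m - T m)) := by
    rw [hm]; module
  have h3 : 0 ≤ ⟪(T m - p) + (T m - q), m - T m⟫ := by rw [inner_add_left]; linarith
  rw [e, inner_neg_left, inner_smul_left, real_inner_self_eq_norm_sq] at h3
  simp at h3
  have : ‖m - T m‖ ^ 2 = 0 := le_antisymm (by linarith) (sq_nonneg _)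
  have := pow_eq_zero_iff (two_ne_zero) |>.1 this
  exact (sub_eq_zero.1 (norm_eq_zero.1 this)).symm

lemma aux_demiclosed {T : H → H} (hT : ∀ x y, ‖T x - T y‖ ^ 2 ≤ ⟪T x - T y, x - y⟫)
    {y : ℕ → H} {l : Filter ℕ} [l.NeBot] {p : H} {C : ℝ} (hb : ∀ᶠ n in l, ‖y n‖ ≤ C)
    (hw : ∀ q, Tendsto (fun n => ⟪y n, q⟫) l (𝓝 ⟪p, q⟫))
    (hd : Tendsto (fun n => ‖T (y n) - y n‖) l (𝓝 0)) : T p = p := by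
  have h1 : ∀ n, 0 ≤ (‖T (y n) - y n‖ + ‖y n‖ + ‖T p‖) * ‖T (y n) - y n‖
      + (‖T (y n) - y n‖ * ‖p - T p‖ - (⟪y n, p - T p⟫ - ⟪T p, p - T p⟫)) := by
    intro n
    have := hT (y n) p
    rw [← real_inner_self_eq_norm_sq] at this
    have e : y n - p = (T (y n) - T p) - (T (y n) - y n) - (p - T p) := by abel
    rw [e, inner_sub_right (T (y n) - T p) _ (p - T p), inner_sub_right (T (y n) - T p) (T (y n) - T p)] at this
    have e2 : T (y n) - T p = (T (y n) - y n) + (y n - T p) := by abel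
    have h2 := abs_real_inner_le_norm (T (y n) - T p) (T (y n) - y n)
    have h3 : ‖T (y n) - T p‖ ≤ ‖T (y n) - y n‖ + ‖y n‖ + ‖T p‖ := by
      rw [e2]
      have := norm_add_le (T (y n) - y n) (y n - T p)
      have := norm_sub_le (y n) (T p)
      linarith
    have h4 := mul_le_mul_of_nonneg_right h3 (norm_nonneg (T (y n) - y n))
    have h5 : ⟪T (y n) - T p, p - T p⟫ = ⟪T (y n) - y n, p - T p⟫ + (⟪y n, p - T p⟫ - ⟪T p, p - T p⟫) := by
      rw [← inner_sub_left, ← inner_add_left, e2]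
    have h6 := abs_real_inner_le_norm (T (y n) - y n) (p - T p)
    have := abs_le.1 h6
    have := abs_le.1 h2
    linarith
  have h2 : ∀ᶠ n in l, 0 ≤ (‖T (y n) - y n‖ + C + ‖T p‖) * ‖T (y n) - y n‖
      + (‖T (y n) - y n‖ * ‖p - T p‖ - (⟪y n, p - T p⟫ - ⟪T p, p - T p⟫)) := by
    filter_upwards [hb] with n hn
    refine (h1 n).trans ?_
    gcongr
  have h3 := (((hd.add_const C).add_const ‖T p‖).mul hd).add
    ((hd.mul_const ‖p - T p‖).sub ((hw (p - T p)).sub_const ⟪T p, p - T p⟫))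
  have h4 := ge_of_tendsto h3 h2
  rw [← inner_sub_left, real_inner_self_eq_norm_sq] at h4
  have : ‖p - T p‖ ^ 2 = 0 := le_antisymm (by linarith) (sq_nonneg _)
  have := pow_eq_zero_iff (two_ne_zero) |>.1 this
  exact (sub_eq_zero.1 (norm_eq_zero.1 this)).symm

end helpers
section helpers2
variable {H : Type*} [NormedAddCommGroup H] [InnerProductSpace ℝ H]

local notation "⟪" x "," y "⟫" => @inner ℝ H _ x y

lemma aux_avg_norm {M : ℕ} (hM : 1 ≤ M) {v : ℕ → H} {B : ℝ}
    (hv : ∀ i ∈ Finset.Icc 1 M, ‖v i‖ ≤ B) :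
    ‖(M : ℝ)⁻¹ • ∑ i ∈ Finset.Icc 1 M, v i‖ ≤ B := by
  have hM' : (0 : ℝ) < M := by exact_mod_cast hM
  rw [norm_smul, norm_inv, Real.norm_eq_abs, abs_of_pos hM', inv_mul_le_iff₀ hM']
  have := norm_sum_le_of_le _ hv
  simpa using this

lemma aux_avg_sq {M : ℕ} (hM : 1 ≤ M) (v : ℕ → H) (p : H) :
    (M : ℝ) * ‖(M : ℝ)⁻¹ • ∑ i ∈ Finset.Icc 1 M, v i - p‖ ^ 2
      ≤ ∑ i ∈ Finset.Icc 1 M, ‖v i - p‖ ^ 2 := by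
  have hM' : (0 : ℝ) < M := by exact_mod_cast hM
  have e : (M : ℝ)⁻¹ • ∑ i ∈ Finset.Icc 1 M, v i - p
      = (M : ℝ)⁻¹ • ∑ i ∈ Finset.Icc 1 M, (v i - p) := by
    rw [Finset.sum_sub_distrib, smul_sub]
    simp only [Finset.sum_const, Nat.card_Icc, Nat.add_sub_cancel]
    rw [← Nat.cast_smul_eq_nsmul ℝ, inv_smul_smul₀ hM'.ne']
  rw [e, norm_smul, norm_inv, Real.norm_eq_abs, abs_of_pos hM', mul_pow]
  have h1 : ‖∑ i ∈ Finset.Icc 1 M, (v i - p)‖ ^ 2 ≤ (∑ i ∈ Finset.Icc 1 M, ‖v i - p‖) ^ 2 :=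
    pow_le_pow_left₀ (norm_nonneg _) (norm_sum_le _ _) 2
  have h2 := sq_sum_le_card_mul_sum_sq (s := Finset.Icc 1 M) (f := fun i => ‖v i - p‖)
  simp only [Nat.card_Icc, Nat.add_sub_cancel] at h2
  have h3 := h1.trans h2
  have e3 : (M : ℝ) * ((M : ℝ)⁻¹ ^ 2 * ‖∑ i ∈ Finset.Icc 1 M, (v i - p)‖ ^ 2)
      = (M : ℝ)⁻¹ * ‖∑ i ∈ Finset.Icc 1 M, (v i - p)‖ ^ 2 := by
    field_simp
  rw [e3, inv_mul_le_iff₀ hM']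
  exact h3

lemma aux_unif {s : Finset ℕ} {a : ℕ → ℕ → ℝ}
    (h : ∀ i ∈ s, ∃ C, ∀ n ≥ 1, a n i ≤ C) : ∃ C, 0 ≤ C ∧ ∀ i ∈ s, ∀ n ≥ 1, a n i ≤ C := by
  classical
  induction s using Finset.induction_on with
  | empty => exact ⟨0, le_rfl, by simp⟩
  | insert j s hj ih =>
    obtain ⟨C, hC0, hC⟩ := ih fun i hi => h i (Finset.mem_insert_of_mem hi)
    obtain ⟨D, hD⟩ := h j (Finset.mem_insert_self _ _)
    refine ⟨max C D, le_max_of_le_left hC0, fun i hi n hn => ?_⟩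
    rcases Finset.mem_insert.1 hi with rfl | hi
    · exact (hD n hn).trans (le_max_right _ _)
    · exact (hC i hi n hn).trans (le_max_left _ _)

lemma aux_dbdd {a b : ℕ → ℝ} {G : ℝ} (ha : ∀ n, 0 ≤ a n)
    (hb : Tendsto b atTop (𝓝 0)) (hrec : ∀ n ≥ 1, a (n + 1) ≤ G + b n * a n) :
    ∃ C, ∀ n ≥ 1, a n ≤ C := by
  obtain ⟨N, hN⟩ := eventually_atTop.1 (hb.eventually (ge_mem_nhds (show (0 : ℝ) < 1 / 2 by norm_num)))
  have h1 : ∀ k, a (k + (N + 1)) ≤ max (2 * G) (a (N + 1)) := by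
    intro k
    induction k with
    | zero => simp
    | succ k ih =>
      have h2 := hrec (k + (N + 1)) (by omega)
      have h3 := hN (k + (N + 1)) (by omega)
      have h4 := mul_le_mul_of_nonneg_right h3 (ha (k + (N + 1)))
      have h5 := le_max_left (2 * G) (a (N + 1))
      rw [show k + 1 + (N + 1) = k + (N + 1) + 1 by ring]
      linarith
  have h0 : 0 ≤ ∑ j ∈ Finset.range (N + 1), a j := Finset.sum_nonneg fun j _ => ha j
  have h0' : 0 ≤ max (2 * G) (a (N + 1)) := (ha _).trans (le_max_right _ _)
  refine ⟨max (2 * G) (a (N + 1)) + ∑ j ∈ Finset.range (N + 1), a j, fun n _ => ?_⟩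
  rcases lt_or_ge n (N + 1) with h | h
  · have := Finset.single_le_sum (f := a) (fun j _ => ha j) (Finset.mem_range.2 h)
    linarith
  · have := h1 (n - (N + 1))
    rw [Nat.sub_add_cancel h] at this
    linarith

lemma aux_step {T : H → H} (hT : ∀ x y, ‖T x - T y‖ ^ 2 ≤ ⟪T x - T y, x - y⟫) {f : H → ℝ}
    {p u y z g e : H} {a l : ℝ} (ha0 : 0 ≤ a) (ha1 : a ≤ 1) (hp : T p = p)
    (h1 : ⟪p - y, z + l • (-g + e) - y⟫ ≤ l * (f p - f y)) :
    ‖a • u + (1 - a) • T y - p‖ ^ 2 ≤ a * ‖u - p‖ ^ 2 + (1 - a) * (‖z - p‖ ^ 2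
      - (‖z - y‖ ^ 2 + ‖T y - y‖ ^ 2) + 2 * l * (f p - f y + ⟪g, p - y⟫ + ⟪e, y - p⟫)) := by
  have e1 : a • u + (1 - a) • T y - p = a • (u - p) + (1 - a) • (T y - p) := by module
  have h2 : ‖a • u + (1 - a) • T y - p‖ ^ 2 ≤ a * ‖u - p‖ ^ 2 + (1 - a) * ‖T y - p‖ ^ 2 := by
    have h : ‖a • (u - p) + (1 - a) • (T y - p)‖ ≤ a * ‖u - p‖ + (1 - a) * ‖T y - p‖ := by
      refine (norm_add_le _ _).trans ?_
      rw [norm_smul, norm_smul, Real.norm_eq_abs, Real.norm_eq_abs, abs_of_nonneg ha0,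
        abs_of_nonneg (sub_nonneg.2 ha1)]
    rw [e1]
    refine (pow_le_pow_left₀ (norm_nonneg _) h 2).trans ?_
    nlinarith [mul_nonneg (mul_nonneg ha0 (sub_nonneg.2 ha1)) (sq_nonneg (‖u - p‖ - ‖T y - p‖))]
  have h3 : ‖T y - p‖ ^ 2 ≤ ‖y - p‖ ^ 2 - ‖T y - y‖ ^ 2 := by
    have h4 := hT y p
    rw [hp] at h4
    have e2 : T y - y = (T y - p) - (y - p) := by abel
    rw [e2, norm_sub_sq_real (T y - p) (y - p)]
    linarith
  have h5 : ‖y - p‖ ^ 2 ≤ ‖z - p‖ ^ 2 - ‖z - y‖ ^ 2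
      + 2 * l * (f p - f y + ⟪g, p - y⟫ + ⟪e, y - p⟫) := by
    have e3 : z + l • (-g + e) - y = (z - y) + l • (-g + e) := by abel
    rw [e3, inner_add_right, inner_smul_right, inner_add_right, inner_neg_right] at h1
    have e4 : z - p = (z - y) - (p - y) := by abel
    rw [e4, norm_sub_sq_real (z - y) (p - y), norm_sub_rev y p, real_inner_comm (p - y) (z - y),
      real_inner_comm (p - y) g]
    have e5 : ⟪e, y - p⟫ = - ⟪p - y, e⟫ := by
      rw [real_inner_comm, ← neg_sub p y, inner_neg_left]
    rw [e5]
    nlinarith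
  refine h2.trans ?_
  have := mul_le_mul_of_nonneg_left (h3.trans (sub_le_sub_right h5 _)) (sub_nonneg.2 ha1)
  nlinarith

end helpers2

theorem alg2_weak_convergence_strict_convex
    {H : Type*} [NormedAddCommGroup H] [InnerProductSpace ℝ H] [CompleteSpace H]
    (M : ℕ) (hM : 1 ≤ M)
    (f h : ℕ → H → ℝ) (h' : ℕ → H → H) (L : ℕ → ℝ) (T : ℕ → H → H)
    (hf_cont : ∀ i ∈ Finset.Icc 1 M, Continuous (f i))
    (hf_conv : ∀ i ∈ Finset.Icc 1 M, ConvexOn ℝ Set.univ (f i))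
    (hh_conv : ∀ i ∈ Finset.Icc 1 M, ConvexOn ℝ Set.univ (h i))
    (hh_grad : ∀ i ∈ Finset.Icc 1 M, ∀ x : H, HasGradientAt (h i) (h' i x) x)
    (hL_pos : ∀ i ∈ Finset.Icc 1 M, 0 < L i)
    (hh_lip : ∀ i ∈ Finset.Icc 1 M, ∀ x y : H, ‖h' i x - h' i y‖ ≤ (1 / L i) * ‖x - y‖)
    (hT_firm : ∀ i ∈ Finset.Icc 1 M, ∀ x y : H,
      ‖T i x - T i y‖ ^ 2 ≤ @inner ℝ H _ (T i x - T i y) (x - y))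
    (S : Set H) (hS : S = ⋂ i ∈ Finset.Icc 1 M, {x : H | T i x = x}) (hS_ne : S.Nonempty)
    (θ lam β α : ℕ → ℝ) (σ : ℝ) (hσ : 1 ≤ σ)
    (hθ_range : ∀ n, 0 ≤ θ n ∧ θ n < 1)
    (hlam_pos : ∀ n, 0 < lam n)
    (hlam_le : ∀ n, ∀ i ∈ Finset.Icc 1 M, lam n ≤ 2 * L i)
    (hβ_range : ∀ n, 0 < β n ∧ β n ≤ 1)
    (hα_range : ∀ n, 0 < α n ∧ α n ≤ 1)
    (hθ_anti : Antitone θ) (hlam_anti : Antitone lam)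
    (hβ_anti : Antitone β) (hα_anti : Antitone α)
    (hθ_lim : Tendsto θ atTop (𝓝 0)) (hlam_lim : Tendsto lam atTop (𝓝 0))
    (hβ_lim : Tendsto β atTop (𝓝 0)) (hα_lim : Tendsto α atTop (𝓝 0))
    (hC1 : ¬ Summable α)
    (hC2 : Tendsto (fun n => (1 / α (n+1)) * |1 / lam (n+1) - 1 / lam n|) atTop (𝓝 0))
    (hC3 : Tendsto (fun n => (1 / lam (n+1)) * |1 - α n / α (n+1)|) atTop (𝓝 0))
    (hC4 : Tendsto (fun n => α n / lam n) atTop (𝓝 0))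
    (hC5 : Tendsto (fun n => θ n / (α (n+1) * lam (n+1))) atTop (𝓝 0))
    (hC6 : ∀ n, lam n / lam (n+1) ≤ σ)
    (hC7 : Tendsto (fun n => β n / α (n+1)) atTop (𝓝 0))
    (x z : ℕ → H) (w y d : ℕ → ℕ → H) (u : ℕ → H)
    (hd1 : ∀ i ∈ Finset.Icc 1 M, d 1 i = -(h' i (z 0)))
    (hz : ∀ n ≥ 1, z n = x n + θ n • (x n - x (n-1)))
    (hd : ∀ n ≥ 1, ∀ i ∈ Finset.Icc 1 M, d (n+1) i = -(h' i (z n)) + β n • d n i)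
    (hy : ∀ n ≥ 1, ∀ i ∈ Finset.Icc 1 M, ∀ v : H,
      f i (y n i) + (1 / (2 * lam n)) * ‖z n + lam n • d (n+1) i - y n i‖ ^ 2
        ≤ f i v + (1 / (2 * lam n)) * ‖z n + lam n • d (n+1) i - v‖ ^ 2)
    (hw : ∀ n ≥ 1, ∀ i ∈ Finset.Icc 1 M,
      w n (i+1) = α n • u i + (1 - α n) • T i (y n i))
    (hx : ∀ n ≥ 1, x (n+1) = (M : ℝ)⁻¹ • ∑ i ∈ Finset.Icc 1 M, w n (i+1))
    (hy_bdd : ∀ i ∈ Finset.Icc 1 M, ∃ C, ∀ n ≥ 1, ‖y n i‖ ≤ C)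
    (ψ : H → ℝ) (hψ : ∀ v : H, ψ v = ∑ i ∈ Finset.Icc 1 M, (f i v + h i v))
    (hΩ_ne : ∃ p ∈ S, ∀ v ∈ S, ψ p ≤ ψ v)
    (hψ_strict : StrictConvexOn ℝ Set.univ ψ)
    : ∃ p : H, (p ∈ S ∧ ∀ v ∈ S, ψ p ≤ ψ v) ∧
      ∀ q : H, Tendsto (fun n => @inner ℝ H _ (x n) q) atTop (𝓝 (@inner ℝ H _ p q)) := by
  classical
  have hMpos : (0 : ℝ) < M := by exact_mod_cast hM
  have hfix : ∀ p ∈ S, ∀ i ∈ Finset.Icc 1 M, T i p = p := by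
    intro p hp i hi
    rw [hS] at hp
    simp only [Set.mem_iInter] at hp
    exact hp i hi
  have hfix' : ∀ p, (∀ i ∈ Finset.Icc 1 M, T i p = p) → p ∈ S := by
    intro p hp
    rw [hS]
    simp only [Set.mem_iInter]
    exact hp
  have hTne : ∀ i ∈ Finset.Icc 1 M, ∀ a b : H, ‖T i a - T i b‖ ≤ ‖a - b‖ := by
    intro i hi a b
    have h1 := hT_firm i hi a b
    have h2 := real_inner_le_norm (T i a - T i b) (a - b)
    rcases (norm_nonneg (T i a - T i b)).eq_or_lt with h0 | h0
    · rw [← h0]; exact norm_nonneg _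
    · refine le_of_mul_le_mul_left ?_ h0
      nlinarith
  obtain ⟨p0, hp0⟩ := hS_ne
  -- uniform bounds
  obtain ⟨Cy, hCy0, hCy⟩ := aux_unif (a := fun n i => ‖y n i‖) hy_bdd
  obtain ⟨Cu, hCu0, hCu⟩ := aux_unif (s := Finset.Icc 1 M) (a := fun _ i => ‖u i‖)
    (fun i _ => ⟨‖u i‖, fun _ _ => le_rfl⟩)
  have hCT : ∀ i ∈ Finset.Icc 1 M, ∀ n ≥ 1, ‖T i (y n i)‖ ≤ Cy + 2 * ‖p0‖ := by
    intro i hi n hn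
    have h1 := hTne i hi (y n i) p0
    rw [hfix p0 hp0 i hi] at h1
    have h2 := norm_sub_norm_le (T i (y n i)) p0
    have h3 := norm_sub_le (y n i) p0
    have := hCy i hi n hn
    linarith
  have hwb : ∀ i ∈ Finset.Icc 1 M, ∀ n ≥ 1, ‖w n (i + 1)‖ ≤ Cu + (Cy + 2 * ‖p0‖) := by
    intro i hi n hn
    rw [hw n hn i hi]
    refine (norm_add_le _ _).trans ?_
    have ha := hα_range n
    rw [norm_smul, norm_smul, Real.norm_eq_abs, Real.norm_eq_abs, abs_of_pos ha.1,
      abs_of_nonneg (sub_nonneg.2 ha.2)]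
    have h1 := hCu i hi n hn
    have h2 := hCT i hi n hn
    have h3 : α n * ‖u i‖ ≤ 1 * Cu := mul_le_mul ha.2 h1 (norm_nonneg _) zero_le_one
    have h4 : (1 - α n) * ‖T i (y n i)‖ ≤ 1 * (Cy + 2 * ‖p0‖) :=
      mul_le_mul (by linarith [ha.1]) h2 (norm_nonneg _) zero_le_one
    linarith
  obtain ⟨Cx, hCx⟩ : ∃ Cx, ∀ n, ‖x n‖ ≤ Cx := by
    refine ⟨‖x 0‖ + ‖x 1‖ + (Cu + (Cy + 2 * ‖p0‖)), fun n => ?_⟩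
    have h0 := norm_nonneg (x 0)
    have h1 := norm_nonneg (x 1)
    have h2 := norm_nonneg p0
    match n with
    | 0 => linarith
    | 1 => linarith
    | (k + 2) =>
      have := aux_avg_norm hM (v := fun i => w (k + 1) (i + 1)) (fun i hi => hwb i hi (k + 1) (by omega))
      rw [← hx (k + 1) (by omega)] at this
      have e : k + 1 + 1 = k + 2 := rfl
      rw [e] at this
      linarith
  have hCx0 : 0 ≤ Cx := (norm_nonneg _).trans (hCx 0)
  have hzx : ∀ n ≥ 1, ‖z n - x n‖ ≤ 2 * Cx * θ n := by
    intro n hn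
    rw [hz n hn, add_sub_cancel_left, norm_smul, Real.norm_eq_abs, abs_of_nonneg (hθ_range n).1]
    have h1 := norm_sub_le (x n) (x (n - 1))
    have h2 := hCx n
    have h3 := hCx (n - 1)
    nlinarith [(hθ_range n).1]
  have hCz : ∀ n ≥ 1, ‖z n‖ ≤ 3 * Cx := by
    intro n hn
    have h1 := hzx n hn
    have h2 := norm_sub_norm_le (z n) (x n)
    have h3 := hCx n
    nlinarith [(hθ_range n).2]
  obtain ⟨Cg, hCg0, hCg⟩ := aux_unif (s := Finset.Icc 1 M) (a := fun n i => ‖h' i (z n)‖)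
    (fun i hi => ⟨‖h' i 0‖ + (1 / L i) * (3 * Cx), fun n hn => by
      have h1 := hh_lip i hi (z n) 0
      have h2 := norm_sub_norm_le (h' i (z n)) (h' i 0)
      rw [sub_zero] at h1
      have h3 := mul_le_mul_of_nonneg_left (hCz n hn) (one_div_pos.2 (hL_pos i hi)).le
      show ‖h' i (z n)‖ ≤ _
      linarith⟩)
  obtain ⟨Cd, hCd0, hCd⟩ := aux_unif (s := Finset.Icc 1 M) (a := fun n i => ‖d n i‖)
    (fun i hi => aux_dbdd (a := fun n => ‖d n i‖) (b := β) (G := Cg) (fun n => norm_nonneg _) hβ_lim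
      (fun n hn => by
        rw [hd n hn i hi]
        refine (norm_add_le _ _).trans ?_
        rw [norm_neg, norm_smul, Real.norm_eq_abs, abs_of_pos (hβ_range n).1]
        have := hCg i hi n hn
        linarith))
  obtain ⟨C, hC0, hyC, hTC, huC, hgC, hdC, hxC, hzC⟩ : ∃ C : ℝ, 0 ≤ C ∧
      (∀ i ∈ Finset.Icc 1 M, ∀ n ≥ 1, ‖y n i‖ ≤ C) ∧
      (∀ i ∈ Finset.Icc 1 M, ∀ n ≥ 1, ‖T i (y n i)‖ ≤ C) ∧
      (∀ i ∈ Finset.Icc 1 M, ‖u i‖ ≤ C) ∧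
      (∀ i ∈ Finset.Icc 1 M, ∀ n ≥ 1, ‖h' i (z n)‖ ≤ C) ∧
      (∀ i ∈ Finset.Icc 1 M, ∀ n ≥ 1, ‖d n i‖ ≤ C) ∧
      (∀ n, ‖x n‖ ≤ C) ∧ (∀ n ≥ 1, ‖z n‖ ≤ C) := by
    have hq := norm_nonneg p0
    refine ⟨Cy + 2 * ‖p0‖ + Cu + Cg + Cd + 3 * Cx, by positivity, ?_, ?_, ?_, ?_, ?_, ?_, ?_⟩
    · intro i hi n hn; have := hCy i hi n hn; linarith
    · intro i hi n hn; have := hCT i hi n hn; linarith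
    · intro i hi; have := hCu i hi 1 le_rfl; linarith
    · intro i hi n hn; have := hCg i hi n hn; linarith
    · intro i hi n hn; have := hCd i hi n hn; linarith
    · intro n; have := hCx n; linarith
    · intro n hn; have := hCz n hn; linarith
  have hzxC : ∀ n ≥ 1, ‖z n - x n‖ ≤ 2 * C * θ n := by
    intro n hn
    rw [hz n hn, add_sub_cancel_left, norm_smul, Real.norm_eq_abs, abs_of_nonneg (hθ_range n).1]
    have h1 := norm_sub_le (x n) (x (n - 1))
    have h2 := hxC n
    have h3 := hxC (n - 1)
    nlinarith [(hθ_range n).1]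
  have hprox : ∀ n ≥ 1, ∀ i ∈ Finset.Icc 1 M, ∀ v,
      @inner ℝ H _ (v - y n i) (z n + lam n • (-(h' i (z n)) + β n • d n i) - y n i)
        ≤ lam n * (f i v - f i (y n i)) := by
    intro n hn i hi v
    have := aux_prox_ineq (hf_conv i hi) (hlam_pos n) (hy n hn i hi) v
    rwa [hd n hn i hi] at this
  -- step 1: asymptotic regularity
  have hrec : ∀ m ≥ 1, ‖x (m + 2) - x (m + 1)‖ / lam (m + 1)
      ≤ (1 - α (m + 1)) * (‖x (m + 1) - x m‖ / lam m)
        + α (m + 1) * (2 * C * ((1 / lam (m+1)) * |1 - α m / α (m+1)|)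
          + 4 * C * ((1 / α (m+1)) * |1 / lam (m+1) - 1 / lam m|)
          + 4 * C * (θ m / (α (m+1) * lam (m+1))) + 2 * C * (β m / α (m+1))) := by
    intro m hm
    have hl := hlam_pos (m + 1)
    have hlm := hlam_pos m
    have ha := hα_range (m + 1)
    have ham := hα_range m
    set Δ := |1 / lam (m+1) - 1 / lam m| with hΔ
    have hΔ0 : 0 ≤ Δ := abs_nonneg _
    -- bound for z
    have hzz : ‖z (m + 1) - z m‖ ≤ ‖x (m + 1) - x m‖ + 4 * C * θ m := by
      have h1 := hzxC (m + 1) (by omega)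
      have h2 := hzxC m hm
      have h3 := hθ_anti (Nat.le_succ m)
      have e : z (m + 1) - z m = (z (m + 1) - x (m + 1)) + (x (m + 1) - x m) - (z m - x m) := by abel
      have h4 := norm_sub_le ((z (m + 1) - x (m + 1)) + (x (m + 1) - x m)) (z m - x m)
      have h5 := norm_add_le (z (m + 1) - x (m + 1)) (x (m + 1) - x m)
      rw [← e] at h4
      have h6 : C * θ (m + 1) ≤ C * θ m := mul_le_mul_of_nonneg_left h3 hC0
      linarith
    have hxx : ‖x (m + 1) - x m‖ / lam (m + 1) ≤ ‖x (m + 1) - x m‖ / lam m + 2 * C * Δ := by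
      have h1 : ‖x (m + 1) - x m‖ / lam (m + 1) - ‖x (m + 1) - x m‖ / lam m
          = ‖x (m + 1) - x m‖ * (1 / lam (m + 1) - 1 / lam m) := by ring
      have h2 : ‖x (m + 1) - x m‖ * (1 / lam (m + 1) - 1 / lam m) ≤ 2 * C * Δ := by
        refine mul_le_mul ?_ (le_abs_self _) ?_ (by positivity)
        · have := norm_sub_le (x (m + 1)) (x m)
          linarith [hxC (m + 1), hxC m]
        · rw [sub_nonneg]
          exact one_div_le_one_div_of_le hl (hlam_anti (Nat.le_succ m))
      linarith
    set B := ‖x (m + 1) - x m‖ / lam m + 4 * C * Δ + 4 * C * (θ m / lam (m + 1)) + 2 * C * β m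
      with hB
    have hyy : ∀ i ∈ Finset.Icc 1 M, ‖y (m + 1) i - y m i‖ ≤ lam (m + 1) * B := by
      intro i hi
      have h1 := aux_prox_diff hl hlm (hprox (m + 1) (by omega) i hi) (hprox m hm i hi)
        (aux_forward_nonexp (hL_pos i hi) (hh_conv i hi) (hh_grad i hi) (hh_lip i hi) hl
          (hlam_le (m + 1) i hi) (z (m + 1)) (z m))
      rw [norm_smul, norm_smul, Real.norm_eq_abs, Real.norm_eq_abs, abs_of_pos (hβ_range _).1,
        abs_of_pos (hβ_range _).1] at h1
      have h2 : β (m + 1) * ‖d (m + 1) i‖ ≤ β m * C :=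
        mul_le_mul (hβ_anti (Nat.le_succ m)) (hdC i hi (m + 1) (by omega)) (norm_nonneg _)
          (hβ_range m).1.le
      have h3 : β m * ‖d m i‖ ≤ β m * C :=
        mul_le_mul_of_nonneg_left (hdC i hi m hm) (hβ_range m).1.le
      have h4 : (‖z m‖ + ‖y m i‖) * Δ ≤ 2 * C * Δ := by
        refine mul_le_mul_of_nonneg_right ?_ hΔ0
        linarith [hzC m hm, hyC i hi m hm]
      have h5 : ‖z (m + 1) - z m‖ / lam (m + 1)
          ≤ ‖x (m + 1) - x m‖ / lam (m + 1) + 4 * C * (θ m / lam (m + 1)) := by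
        refine (div_le_div_of_nonneg_right hzz hl.le).trans (le_of_eq ?_)
        ring
      have h6 : ‖y (m + 1) i - y m i‖ / lam (m + 1) ≤ B := by
        rw [hB]; linarith
      rwa [div_le_iff₀ hl, mul_comm] at h6
    have hww : ∀ i ∈ Finset.Icc 1 M, ‖w (m + 1) (i + 1) - w m (i + 1)‖
        ≤ 2 * C * |α (m + 1) - α m| + (1 - α (m + 1)) * (lam (m + 1) * B) := by
      intro i hi
      rw [hw (m + 1) (by omega) i hi, hw m hm i hi]
      have e : α (m + 1) • u i + (1 - α (m + 1)) • T i (y (m + 1) i)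
          - (α m • u i + (1 - α m) • T i (y m i))
          = (α (m + 1) - α m) • (u i - T i (y m i))
            + (1 - α (m + 1)) • (T i (y (m + 1) i) - T i (y m i)) := by module
      rw [e]
      refine (norm_add_le _ _).trans ?_
      rw [norm_smul, norm_smul, Real.norm_eq_abs, Real.norm_eq_abs,
        abs_of_nonneg (sub_nonneg.2 ha.2)]
      have h1 := (hTne i hi (y (m + 1) i) (y m i)).trans (hyy i hi)
      have h2 := mul_le_mul_of_nonneg_left h1 (sub_nonneg.2 ha.2)
      have h3 : ‖u i - T i (y m i)‖ ≤ 2 * C := by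
        have := norm_sub_le (u i) (T i (y m i))
        linarith [huC i hi, hTC i hi m hm]
      have h4 := mul_le_mul_of_nonneg_left h3 (abs_nonneg (α (m + 1) - α m))
      linarith
    have hmain : ‖x (m + 2) - x (m + 1)‖
        ≤ 2 * C * |α (m + 1) - α m| + (1 - α (m + 1)) * (lam (m + 1) * B) := by
      have h1 := aux_avg_norm hM hww
      rw [Finset.sum_sub_distrib, smul_sub, ← hx (m + 1) (by omega), ← hx m hm] at h1
      exact h1
    have h1 : ‖x (m + 2) - x (m + 1)‖ / lam (m + 1)
        ≤ 2 * C * (|α (m + 1) - α m| / lam (m + 1)) + (1 - α (m + 1)) * B := by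
      rw [div_le_iff₀ hl]
      refine hmain.trans (le_of_eq ?_)
      field_simp
    have e1 : |α (m + 1) - α m| / lam (m + 1)
        = α (m + 1) * ((1 / lam (m+1)) * |1 - α m / α (m+1)|) := by
      have : α (m + 1) - α m = α (m + 1) * (1 - α m / α (m + 1)) := by
        have := ha.1.ne'
        field_simp
      rw [this, abs_mul, abs_of_pos ha.1]
      ring
    have e2 : Δ = α (m + 1) * ((1 / α (m+1)) * Δ) := by
      have := ha.1.ne'
      field_simp
    have e3 : θ m / lam (m + 1) = α (m + 1) * (θ m / (α (m+1) * lam (m+1))) := by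
      have := ha.1.ne'
      field_simp
    have e4 : β m = α (m + 1) * (β m / α (m+1)) := by
      have := ha.1.ne'
      field_simp
    have h2 : (1 - α (m + 1)) * B ≤ (1 - α (m + 1)) * (‖x (m + 1) - x m‖ / lam m)
        + (4 * C * Δ + 4 * C * (θ m / lam (m + 1)) + 2 * C * β m) := by
      have hnn : 0 ≤ 4 * C * Δ + 4 * C * (θ m / lam (m + 1)) + 2 * C * β m := by
        have := (hβ_range m).1.le
        have := (hθ_range m).1
        positivity
      have := mul_nonneg ha.1.le hnn
      rw [hB]
      linarith
    have e5 : α (m + 1) * (2 * C * ((1 / lam (m+1)) * |1 - α m / α (m+1)|)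
          + 4 * C * ((1 / α (m+1)) * Δ)
          + 4 * C * (θ m / (α (m+1) * lam (m+1))) + 2 * C * (β m / α (m+1)))
        = 2 * C * (|α (m + 1) - α m| / lam (m + 1)) + (4 * C * Δ + 4 * C * (θ m / lam (m + 1))
          + 2 * C * β m) := by
      rw [e1, e3]
      nth_rewrite 2 [e2]
      nth_rewrite 2 [e4]
      ring
    rw [e5]
    linarith
  have hr : Tendsto (fun n => ‖x (n + 1) - x n‖ / lam n) atTop (𝓝 0) := by
    rw [← tendsto_add_atTop_iff_nat 1]
    refine aux_xu (a := fun n => α (n + 2))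
      (e := fun n => 2 * C * ((1 / lam (n+1+1)) * |1 - α (n+1) / α (n+1+1)|)
          + 4 * C * ((1 / α (n+1+1)) * |1 / lam (n+1+1) - 1 / lam (n+1)|)
          + 4 * C * (θ (n+1) / (α (n+1+1) * lam (n+1+1))) + 2 * C * (β (n+1) / α (n+1+1)))
      (fun n => div_nonneg (norm_nonneg _) (hlam_pos _).le) (fun n => (hα_range _).1.le)
      (fun n => (hα_range _).2) ?_ ?_ ?_
    · rwa [summable_nat_add_iff 2]
    · have := (((hC3.const_mul (2 * C)).add (hC2.const_mul (4 * C))).add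
        (hC5.const_mul (4 * C))).add (hC7.const_mul (2 * C))
      have h2 := (tendsto_add_atTop_iff_nat 1).2 this
      simpa using h2
    · intro n
      exact hrec (n + 1) (by omega)
  have hθl : Tendsto (fun n => θ n / lam n) atTop (𝓝 0) := by
    refine squeeze_zero (fun n => div_nonneg (hθ_range n).1 (hlam_pos n).le) (fun n => ?_) hC5
    refine div_le_div_of_nonneg_left (hθ_range n).1
      (mul_pos (hα_range _).1 (hlam_pos _)) ?_
    have h1 := hlam_anti (Nat.le_succ n)
    have h2 := (hα_range (n + 1)).2
    have h3 := hlam_pos (n + 1)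
    calc α (n + 1) * lam (n + 1) ≤ 1 * lam (n + 1) := mul_le_mul_of_nonneg_right h2 h3.le
      _ ≤ lam n := by rw [one_mul]; exact h1
  -- step 2: basic estimate
  have hbasic : ∀ p ∈ S, ∃ ε : ℕ → ℝ, Tendsto ε atTop (𝓝 0) ∧ (∀ n, 0 ≤ ε n) ∧ ∀ n ≥ 1,
      (1 - α n) * ∑ i ∈ Finset.Icc 1 M, (‖z n - y n i‖ ^ 2 + ‖T i (y n i) - y n i‖ ^ 2)
        ≤ lam n * ε n + 2 * lam n * ((1 - α n) * ∑ i ∈ Finset.Icc 1 M,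
          (f i p - f i (y n i) + @inner ℝ H _ (h' i (z n)) (p - y n i)
            + @inner ℝ H _ (β n • d n i) (y n i - p))) := by
    intro p hp
    set K := ∑ i ∈ Finset.Icc 1 M, ‖u i - p‖ ^ 2 with hK
    have hK0 : 0 ≤ K := Finset.sum_nonneg fun i _ => sq_nonneg _
    refine ⟨fun n => M * ((2 * C + 2 * ‖p‖) * (‖x (n + 1) - x n‖ / lam n + 2 * C * (θ n / lam n)))
      + K * (α n / lam n), ?_, ?_, ?_⟩
    · have := (((hr.add (hθl.const_mul (2 * C))).const_mul (2 * C + 2 * ‖p‖)).const_mul (M : ℝ)).add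
        (hC4.const_mul K)
      simpa using this
    · intro n
      have h1 := (hlam_pos n).le
      have h2 := (hα_range n).1.le
      have h3 := (hθ_range n).1
      positivity
    · intro n hn
      have hl := hlam_pos n
      have ha := hα_range n
      have h1 := aux_avg_sq hM (fun i => w n (i + 1)) p
      rw [← hx n hn] at h1
      have h2 : ∑ i ∈ Finset.Icc 1 M, ‖w n (i + 1) - p‖ ^ 2 ≤ ∑ i ∈ Finset.Icc 1 M,
          (α n * ‖u i - p‖ ^ 2 + (1 - α n) * (‖z n - p‖ ^ 2
            - (‖z n - y n i‖ ^ 2 + ‖T i (y n i) - y n i‖ ^ 2)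
            + 2 * lam n * (f i p - f i (y n i) + @inner ℝ H _ (h' i (z n)) (p - y n i)
            + @inner ℝ H _ (β n • d n i) (y n i - p)))) := by
        refine Finset.sum_le_sum fun i hi => ?_
        rw [hw n hn i hi]
        exact aux_step (hT_firm i hi) ha.1.le ha.2 (hfix p hp i hi) (hprox n hn i hi p)
      have h3 := h1.trans h2
      rw [Finset.sum_add_distrib, ← Finset.mul_sum, ← Finset.mul_sum, Finset.sum_add_distrib,
        Finset.sum_sub_distrib, ← Finset.mul_sum, Finset.sum_const, Nat.card_Icc,
        Nat.add_sub_cancel, nsmul_eq_mul, ← hK] at h3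
      set Q := ∑ i ∈ Finset.Icc 1 M, (‖z n - y n i‖ ^ 2 + ‖T i (y n i) - y n i‖ ^ 2)
      set D := ∑ i ∈ Finset.Icc 1 M, (f i p - f i (y n i)
        + @inner ℝ H _ (h' i (z n)) (p - y n i) + @inner ℝ H _ (β n • d n i) (y n i - p))
      have h4 : ‖z n - p‖ ^ 2 - ‖x (n + 1) - p‖ ^ 2
          ≤ (2 * C + 2 * ‖p‖) * (‖x (n + 1) - x n‖ + 2 * C * θ n) := by
        have k1 : ‖z n - p‖ - ‖x (n + 1) - p‖ ≤ ‖x (n + 1) - x n‖ + 2 * C * θ n := by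
          have q1 := norm_sub_norm_le (z n - p) (x (n + 1) - p)
          have q2 : z n - p - (x (n + 1) - p) = (z n - x n) - (x (n + 1) - x n) := by abel
          rw [q2] at q1
          have q3 := norm_sub_le (z n - x n) (x (n + 1) - x n)
          linarith [hzxC n hn]
        have k2 : ‖z n - p‖ + ‖x (n + 1) - p‖ ≤ 2 * C + 2 * ‖p‖ := by
          have q1 := norm_sub_le (z n) p
          have q2 := norm_sub_le (x (n + 1)) p
          linarith [hzC n hn, hxC (n + 1)]
        have k3 : 0 ≤ ‖x (n + 1) - x n‖ + 2 * C * θ n := by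
          have := (hθ_range n).1
          positivity
        have k4 : 0 ≤ ‖z n - p‖ + ‖x (n + 1) - p‖ := by positivity
        calc ‖z n - p‖ ^ 2 - ‖x (n + 1) - p‖ ^ 2
            = (‖z n - p‖ + ‖x (n + 1) - p‖) * (‖z n - p‖ - ‖x (n + 1) - p‖) := by ring
          _ ≤ (‖z n - p‖ + ‖x (n + 1) - p‖) * (‖x (n + 1) - x n‖ + 2 * C * θ n) :=
            mul_le_mul_of_nonneg_left k1 k4
          _ ≤ _ := mul_le_mul_of_nonneg_right k2 k3
      have h5 : lam n * (M * ((2 * C + 2 * ‖p‖) * (‖x (n + 1) - x n‖ / lam n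
          + 2 * C * (θ n / lam n))) + K * (α n / lam n))
          = M * ((2 * C + 2 * ‖p‖) * (‖x (n + 1) - x n‖ + 2 * C * θ n)) + K * α n := by
        field_simp
      have h6 := mul_le_mul_of_nonneg_left h4 hMpos.le
      have h7 : 0 ≤ α n * (M * ‖z n - p‖ ^ 2) := by have := ha.1.le; positivity
      show (1 - α n) * Q ≤ lam n * (M * ((2 * C + 2 * ‖p‖) * (‖x (n + 1) - x n‖ / lam n
          + 2 * C * (θ n / lam n))) + K * (α n / lam n)) + 2 * lam n * ((1 - α n) * D)
      rw [h5]
      linarith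
  have hαhalf : ∀ᶠ n in atTop, α n ≤ 1 / 2 :=
    hα_lim.eventually (ge_mem_nhds (show (0 : ℝ) < 1 / 2 by norm_num))
  have hge1 : ∀ᶠ n : ℕ in atTop, 1 ≤ n := eventually_ge_atTop 1
  choose! sg hsg using fun i hi (p : H) =>
    aux_exists_subgradient (hf_cont i hi) (hf_conv i hi) p
  -- step 3: residuals vanish
  have hQ : Tendsto (fun n => ∑ i ∈ Finset.Icc 1 M,
      (‖z n - y n i‖ ^ 2 + ‖T i (y n i) - y n i‖ ^ 2)) atTop (𝓝 0) := by
    obtain ⟨ε, hε, hε0, hb⟩ := hbasic p0 hp0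
    set K := ∑ i ∈ Finset.Icc 1 M, ((‖sg i p0‖ + C + C) * (‖p0‖ + C)) with hK
    have hK0 : 0 ≤ K := Finset.sum_nonneg fun i _ => by positivity
    have hlim : Tendsto (fun n => 2 * (lam n * ε n + 2 * lam n * K)) atTop (𝓝 0) := by
      have := ((hlam_lim.mul hε).add ((hlam_lim.const_mul 2).mul_const K)).const_mul 2
      simpa using this
    refine squeeze_zero' (Eventually.of_forall fun n => Finset.sum_nonneg fun i _ => by positivity)
      ?_ hlim
    filter_upwards [hαhalf, hge1] with n ha hn
    have h1 := hb n hn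
    set Q := ∑ i ∈ Finset.Icc 1 M, (‖z n - y n i‖ ^ 2 + ‖T i (y n i) - y n i‖ ^ 2)
    have hQ0 : 0 ≤ Q := Finset.sum_nonneg fun i _ => by positivity
    have h2 : ∑ i ∈ Finset.Icc 1 M, (f i p0 - f i (y n i)
        + @inner ℝ H _ (h' i (z n)) (p0 - y n i) + @inner ℝ H _ (β n • d n i) (y n i - p0)) ≤ K := by
      refine Finset.sum_le_sum fun i hi => ?_
      have k1 := hsg i hi p0 (y n i)
      have k2 := real_inner_le_norm (-sg i p0) (y n i - p0)
      rw [inner_neg_left, norm_neg] at k2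
      have k3 := real_inner_le_norm (h' i (z n)) (p0 - y n i)
      have k4 := real_inner_le_norm (β n • d n i) (y n i - p0)
      have k5 : ‖β n • d n i‖ ≤ C := by
        rw [norm_smul, Real.norm_eq_abs, abs_of_pos (hβ_range n).1]
        have := mul_le_mul (hβ_range n).2 (hdC i hi n hn) (norm_nonneg _) zero_le_one
        linarith
      have k6 : ‖y n i - p0‖ ≤ ‖p0‖ + C := by
        have := norm_sub_le (y n i) p0
        linarith [hyC i hi n hn]
      rw [norm_sub_rev] at k3
      have k7 := mul_le_mul (hgC i hi n hn) k6 (norm_nonneg _) hC0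
      have k8 := mul_le_mul k5 k6 (norm_nonneg _) hC0
      have k9 := mul_le_mul_of_nonneg_left k6 (norm_nonneg (sg i p0))
      linarith
    have ha0 := (hα_range n).1
    have h3 : (1 - α n) * ∑ i ∈ Finset.Icc 1 M, (f i p0 - f i (y n i)
        + @inner ℝ H _ (h' i (z n)) (p0 - y n i) + @inner ℝ H _ (β n • d n i) (y n i - p0)) ≤ K := by
      have := mul_le_mul_of_nonneg_left h2 (show 0 ≤ 1 - α n by linarith)
      nlinarith
    have h4 := mul_le_mul_of_nonneg_left h3 (show 0 ≤ 2 * lam n by linarith [hlam_pos n])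
    nlinarith
  have hres : ∀ i ∈ Finset.Icc 1 M, Tendsto (fun n => ‖z n - y n i‖) atTop (𝓝 0) ∧
      Tendsto (fun n => ‖T i (y n i) - y n i‖) atTop (𝓝 0) := by
    intro i hi
    have hs := (Real.continuous_sqrt.tendsto 0).comp hQ
    rw [Real.sqrt_zero] at hs
    have hle : ∀ n, ‖z n - y n i‖ ^ 2 + ‖T i (y n i) - y n i‖ ^ 2 ≤ ∑ i ∈ Finset.Icc 1 M,
      (‖z n - y n i‖ ^ 2 + ‖T i (y n i) - y n i‖ ^ 2) := fun n =>
      Finset.single_le_sum (f := fun i => ‖z n - y n i‖ ^ 2 + ‖T i (y n i) - y n i‖ ^ 2)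
        (fun i _ => by positivity) hi
    constructor
    · refine squeeze_zero (fun n => norm_nonneg _) (fun n => ?_) hs
      refine Real.le_sqrt_of_sq_le ?_
      linarith [hle n, sq_nonneg ‖T i (y n i) - y n i‖]
    · refine squeeze_zero (fun n => norm_nonneg _) (fun n => ?_) hs
      refine Real.le_sqrt_of_sq_le ?_
      linarith [hle n, sq_nonneg ‖z n - y n i‖]
  have hzx0 : Tendsto (fun n => ‖z n - x n‖) atTop (𝓝 0) := by
    have h1 : Tendsto (fun n => 2 * C * θ n) atTop (𝓝 0) := by
      simpa using hθ_lim.const_mul (2 * C)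
    refine squeeze_zero' (Eventually.of_forall fun n => norm_nonneg _) ?_ h1
    filter_upwards [hge1] with n hn using hzxC n hn
  -- uniqueness of the minimizer
  obtain ⟨ps, hpsS, hpsmin⟩ := hΩ_ne
  have huniq : ∀ q ∈ S, (∀ v ∈ S, ψ q ≤ ψ v) → q = ps := by
    intro q hq hqmin
    by_contra hne
    have h1 := hψ_strict.2 (Set.mem_univ q) (Set.mem_univ ps) hne
      (show (0 : ℝ) < 1 / 2 by norm_num) (show (0 : ℝ) < 1 / 2 by norm_num) (by norm_num)
    have hmid : (1 / 2 : ℝ) • q + (1 / 2 : ℝ) • ps ∈ S :=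
      hfix' _ fun i hi => aux_fix_mid (hT_firm i hi) (hfix q hq i hi) (hfix ps hpsS i hi)
    have h2 := hqmin _ hmid
    have h3 := hpsmin _ hmid
    simp only [smul_eq_mul] at h1
    linarith
  -- weak cluster points are minimizers
  refine ⟨ps, ⟨hpsS, hpsmin⟩, fun q => ?_⟩
  rw [tendsto_iff_ultrafilter]
  intro U hU
  obtain ⟨c, hc⟩ := aux_weak_cpt hxC U
  suffices hcps : c = ps by
    rw [← hcps]; exact hc q
  have hshift : ∀ a b : ℕ → H, Tendsto (fun n => ‖a n - b n‖) atTop (𝓝 0) →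
      (∀ q, Tendsto (fun n => @inner ℝ H _ (b n) q) U (𝓝 (@inner ℝ H _ c q))) →
      ∀ q, Tendsto (fun n => @inner ℝ H _ (a n) q) U (𝓝 (@inner ℝ H _ c q)) := by
    intro a b hab hb q
    have h1 : Tendsto (fun n => @inner ℝ H _ (a n - b n) q) U (𝓝 0) := by
      have h2 : Tendsto (fun n => ‖a n - b n‖ * ‖q‖) U (𝓝 0) := by
        simpa using (hab.mono_left hU).mul_const ‖q‖
      exact squeeze_zero_norm (fun n => norm_inner_le_norm _ _) h2
    have h3 := h1.add (hb q)
    simp only [← inner_add_left, sub_add_cancel, zero_add] at h3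
    exact h3
  have hcz := hshift z x hzx0 hc
  have hcy : ∀ i ∈ Finset.Icc 1 M, ∀ q,
      Tendsto (fun n => @inner ℝ H _ (y n i) q) U (𝓝 (@inner ℝ H _ c q)) := by
    intro i hi
    refine hshift (fun n => y n i) z ?_ hcz
    simpa only [norm_sub_rev] using (hres i hi).1
  have hcS : c ∈ S := by
    refine hfix' _ fun i hi => aux_demiclosed (hT_firm i hi) (y := fun n => y n i) (l := U) (C := C)
      ?_ (hcy i hi) ((hres i hi).2.mono_left hU)
    exact (hge1.filter_mono hU).mono fun n hn => hyC i hi n hn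
  refine huniq c hcS fun p hp => ?_
  obtain ⟨ε, hε, hε0, hb⟩ := hbasic p hp
  have hineq : ∀ᶠ n in (U : Filter ℕ), ψ c - ψ p ≤ ε n + ∑ i ∈ Finset.Icc 1 M,
      (C * ‖z n - y n i‖ + β n * (C * (C + ‖p‖))
        - (@inner ℝ H _ (y n i) (sg i c) - @inner ℝ H _ c (sg i c))
        - (@inner ℝ H _ (z n) (h' i c) - @inner ℝ H _ c (h' i c))) := by
    filter_upwards [hαhalf.filter_mono hU, hge1.filter_mono hU] with n ha hn
    have h1 := hb n hn
    set D := ∑ i ∈ Finset.Icc 1 M, (f i p - f i (y n i)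
        + @inner ℝ H _ (h' i (z n)) (p - y n i) + @inner ℝ H _ (β n • d n i) (y n i - p)) with hD
    have hQ0 : 0 ≤ ∑ i ∈ Finset.Icc 1 M, (‖z n - y n i‖ ^ 2 + ‖T i (y n i) - y n i‖ ^ 2) :=
      Finset.sum_nonneg fun i _ => by positivity
    have h2 : 0 ≤ lam n * (ε n + 2 * ((1 - α n) * D)) := by
      have := mul_nonneg (show 0 ≤ 1 - α n by linarith) hQ0
      linarith
    have h3 : 0 ≤ ε n + 2 * ((1 - α n) * D) := nonneg_of_mul_nonneg_right h2 (hlam_pos n)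
    have h4 : 0 ≤ ε n + D := by
      rcases le_or_gt 0 D with h | h
      · linarith [hε0 n]
      · nlinarith
    refine (show ψ c - ψ p ≤ ε n + (D + (ψ c - ψ p)) by linarith).trans ?_
    gcongr
    rw [hψ, hψ, hD, ← Finset.sum_sub_distrib, ← Finset.sum_add_distrib]
    refine Finset.sum_le_sum fun i hi => ?_
    have k1 := hsg i hi c (y n i)
    have k2 := aux_grad_ineq (hh_conv i hi) (hh_grad i hi) c (z n)
    have k3 := aux_grad_ineq (hh_conv i hi) (hh_grad i hi) (z n) p
    have k4 : @inner ℝ H _ (h' i (z n)) (p - y n i) = @inner ℝ H _ (h' i (z n)) (p - z n)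
        + @inner ℝ H _ (h' i (z n)) (z n - y n i) := by
      rw [← inner_add_right]; congr 1; abel
    have k5 := real_inner_le_norm (h' i (z n)) (z n - y n i)
    have k6 := mul_le_mul_of_nonneg_right (hgC i hi n hn) (norm_nonneg (z n - y n i))
    have k7 : @inner ℝ H _ (β n • d n i) (y n i - p) ≤ β n * (C * (C + ‖p‖)) := by
      rw [real_inner_smul_left]
      refine mul_le_mul_of_nonneg_left ?_ (hβ_range n).1.le
      refine (real_inner_le_norm _ _).trans ?_
      refine mul_le_mul (hdC i hi n hn) ?_ (norm_nonneg _) hC0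
      exact (norm_sub_le _ _).trans (by linarith [hyC i hi n hn])
    rw [real_inner_comm, inner_sub_left] at k1 k2
    linarith
  have hlim : Tendsto (fun n => ε n + ∑ i ∈ Finset.Icc 1 M,
      (C * ‖z n - y n i‖ + β n * (C * (C + ‖p‖))
        - (@inner ℝ H _ (y n i) (sg i c) - @inner ℝ H _ c (sg i c))
        - (@inner ℝ H _ (z n) (h' i c) - @inner ℝ H _ c (h' i c)))) U (𝓝 0) := by
    have h1 : Tendsto (fun n => ∑ i ∈ Finset.Icc 1 M,
      (C * ‖z n - y n i‖ + β n * (C * (C + ‖p‖))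
        - (@inner ℝ H _ (y n i) (sg i c) - @inner ℝ H _ c (sg i c))
        - (@inner ℝ H _ (z n) (h' i c) - @inner ℝ H _ c (h' i c)))) U
        (𝓝 (∑ i ∈ Finset.Icc 1 M, (0 : ℝ))) := by
      refine tendsto_finsetSum _ fun i hi => ?_
      have k1 := ((hres i hi).1.mono_left hU).const_mul C
      have k2 := (hβ_lim.mono_left hU).mul_const (C * (C + ‖p‖))
      have k3 := (hcy i hi (sg i c)).sub_const (@inner ℝ H _ c (sg i c))
      have k4 := (hcz (h' i c)).sub_const (@inner ℝ H _ c (h' i c))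
      simpa using ((k1.add k2).sub k3).sub k4
    simpa using (hε.mono_left hU).add h1
  have := ge_of_tendsto hlim hineq
  linarith
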